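/- There exists C > 0 such that for every k ∈ {1,2}, every z ∈ K, every ζ' ∈ ℝ × ℝ^n, every t̂ ∈ ℝ × ℝ^n × ℝ with t̂_{ξd} ≥ 0, and every h ∈ ℂ with h² = m̂_k(z,ζ',t̂) and Re h ≥ 0: if the root ρ̂_{k,+} = −i t̂_{ξd} + i h is real (equivalently Re h = t̂_{ξd}), then 0 ≤ t̂_{ξd} ≤ C (|t̂'| + |ζ'|), |ζ'| ≤ C |t̂|, and the other root has prescribed nonpositive imaginary part: Im ρ̂_{k,−} = −2 t̂_{ξd}. -/

import Mathlib

/-- `m̂_k(z,ζ',t̂) = (-1)^k i (σ + i t̂_σ)² + r_z(ξ' + i t̂_{ξ'})`, where `r_z` is the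
complex-bilinear extension of the quadratic form with coefficient matrix `R`. -/
noncomputable def mhat {n : ℕ} (R : Fin n → Fin n → ℝ) (k : ℕ)
    (σ : ℝ) (ξ : Fin n → ℝ) (tσ : ℝ) (tξ : Fin n → ℝ) : ℂ :=
  (-1 : ℂ) ^ k * Complex.I * ((σ : ℂ) + Complex.I * (tσ : ℂ)) ^ 2 +
    ∑ j, ∑ l, (R j l : ℂ) * ((ξ j : ℂ) + Complex.I * (tξ j : ℂ)) *
      ((ξ l : ℂ) + Complex.I * (tξ l : ℂ))

/-- `μ̂_k = 4 t̂_{ξd}² Re m̂_k − 4 t̂_{ξd}⁴ + (Im m̂_k)²`. -/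
noncomputable def muhat {n : ℕ} (R : Fin n → Fin n → ℝ) (k : ℕ)
    (σ : ℝ) (ξ : Fin n → ℝ) (tσ : ℝ) (tξ : Fin n → ℝ) (tξd : ℝ) : ℝ :=
  4 * tξd ^ 2 * (mhat R k σ ξ tσ tξ).re - 4 * tξd ^ 4 + (mhat R k σ ξ tσ tξ).im ^ 2

theorem aux_bilin {n : ℕ} (A M : Fin n → Fin n → ℝ) (hM : ∀ j l, |A j l| ≤ M j l)
    (x y : Fin n → ℝ) :
    |∑ j, ∑ l, A j l * x j * y l| ≤
      (∑ j, ∑ l, M j l) * Real.sqrt (∑ j, (x j) ^ 2) * Real.sqrt (∑ j, (y j) ^ 2) := by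
  have key : ∀ (w : Fin n → ℝ) (j : Fin n), |w j| ≤ Real.sqrt (∑ j, (w j) ^ 2) := by
    intro w j
    apply Real.abs_le_sqrt
    exact Finset.single_le_sum (f := fun j => (w j) ^ 2) (fun i _ => sq_nonneg _)
      (Finset.mem_univ j)
  rw [Finset.sum_mul, Finset.sum_mul]
  refine (Finset.abs_sum_le_sum_abs _ _).trans (Finset.sum_le_sum fun j _ => ?_)
  rw [Finset.sum_mul, Finset.sum_mul]
  refine (Finset.abs_sum_le_sum_abs _ _).trans (Finset.sum_le_sum fun l _ => ?_)
  rw [abs_mul, abs_mul]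
  have h0 : 0 ≤ M j l := (abs_nonneg _).trans (hM j l)
  have h1 := hM j l
  have h2 := key x j
  have h3 := key y l
  gcongr

theorem aux_re {n : ℕ} (A : Fin n → Fin n → ℝ) (e : ℝ) (k : ℕ) (hk : (-1 : ℂ) ^ k = (e : ℂ))
    (σ : ℝ) (ξ : Fin n → ℝ) (tσ : ℝ) (tξ : Fin n → ℝ) :
    (mhat A k σ ξ tσ tξ).re = -2 * e * σ * tσ + (∑ j, ∑ l, A j l * ξ j * ξ l)
      - (∑ j, ∑ l, A j l * tξ j * tξ l) := by
  unfold mhat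
  rw [hk, Complex.add_re, Complex.re_sum, add_sub_assoc, ← Finset.sum_sub_distrib]
  congr 1
  · simp [pow_two]; ring
  · refine Finset.sum_congr rfl fun j _ => ?_
    rw [Complex.re_sum, ← Finset.sum_sub_distrib]
    refine Finset.sum_congr rfl fun l _ => ?_
    simp

theorem aux_im {n : ℕ} (A : Fin n → Fin n → ℝ) (e : ℝ) (k : ℕ) (hk : (-1 : ℂ) ^ k = (e : ℂ))
    (σ : ℝ) (ξ : Fin n → ℝ) (tσ : ℝ) (tξ : Fin n → ℝ) :
    (mhat A k σ ξ tσ tξ).im = e * (σ ^ 2 - tσ ^ 2) + ((∑ j, ∑ l, A j l * ξ j * tξ l)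
      + (∑ j, ∑ l, A j l * tξ j * ξ l)) := by
  unfold mhat
  rw [hk, Complex.add_im, Complex.im_sum, ← Finset.sum_add_distrib]
  congr 1
  · simp [pow_two]
  · refine Finset.sum_congr rfl fun j _ => ?_
    rw [Complex.im_sum, ← Finset.sum_add_distrib]
    refine Finset.sum_congr rfl fun l _ => ?_
    simp

set_option maxHeartbeats 1000000 in
theorem aux_real (c N : ℝ) (hc : 0 < c) (hN : 0 ≤ N) (e σ τ X Y a b q1 q2 p1 p2 : ℝ)
    (he : e = 1 ∨ e = -1) (hX : 0 ≤ X) (hY : 0 ≤ Y) (ha : 0 ≤ a)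
    (hq1 : |q1| ≤ N * X * X) (hq1' : c * X ^ 2 ≤ q1) (hq2 : |q2| ≤ N * Y * Y)
    (hp1 : |p1| ≤ N * X * Y) (hp2 : |p2| ≤ N * Y * X)
    (hre : a ^ 2 - b ^ 2 = -2 * e * σ * τ + q1 - q2)
    (him : 2 * a * b = e * (σ ^ 2 - τ ^ 2) + (p1 + p2))
    (hn : a ^ 2 + b ^ 2 ≤ |a ^ 2 - b ^ 2| + |2 * a * b|) :
    a ^ 2 ≤ (2 + 2 * N) * ((τ ^ 2 + Y ^ 2) + (σ ^ 2 + X ^ 2)) ∧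
    σ ^ 2 + X ^ 2 ≤ (2 + 2 / c) * (5 + N + 2 * N ^ 2 / c) * (τ ^ 2 + Y ^ 2 + a ^ 2) := by
  have hXY : N * X * Y ≤ N * ((X ^ 2 + Y ^ 2) / 2) := by
    rw [mul_assoc]
    exact mul_le_mul_of_nonneg_left (by linarith [sq_nonneg (X - Y)]) hN
  rw [abs_le] at hq1 hq2 hp1 hp2
  constructor
  · have h1 : |a ^ 2 - b ^ 2| ≤ σ ^ 2 + τ ^ 2 + N * (X ^ 2 + Y ^ 2) := by
      rw [hre, abs_le]
      rcases he with rfl | rfl <;> constructor <;>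
        linarith [sq_nonneg (σ - τ), sq_nonneg (σ + τ)]
    have h2 : |2 * a * b| ≤ σ ^ 2 + τ ^ 2 + N * (X ^ 2 + Y ^ 2) := by
      rw [him, abs_le]
      rcases he with rfl | rfl <;> constructor <;>
        linarith [sq_nonneg σ, sq_nonneg τ]
    linarith [sq_nonneg b, mul_nonneg hN (sq_nonneg σ), mul_nonneg hN (sq_nonneg τ),
      sq_nonneg X, sq_nonneg Y]
  · have e1 : c * X ^ 2 + b ^ 2 ≤ a ^ 2 + (σ ^ 2 / 2 + 2 * τ ^ 2) + N * Y ^ 2 := by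
      rcases he with rfl | rfl <;>
        linarith [sq_nonneg (σ - 2 * τ), sq_nonneg (σ + 2 * τ)]
    have e3 : 2 * (N * X * Y) ≤ c / 2 * X ^ 2 + 2 * N ^ 2 / c * Y ^ 2 := by
      have : c / 2 * X ^ 2 + 2 * N ^ 2 / c * Y ^ 2 - 2 * (N * X * Y)
          = (c * X - 2 * N * Y) ^ 2 / (2 * c) := by
        field_simp
        ring
      have h4 : 0 ≤ (c * X - 2 * N * Y) ^ 2 / (2 * c) := by positivity
      linarith
    have e2 : σ ^ 2 ≤ τ ^ 2 + (b ^ 2 + a ^ 2) + 2 * (N * X * Y) := by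
      rcases he with rfl | rfl <;>
        linarith [sq_nonneg (a - b), sq_nonneg (a + b)]
    have hD : 0 ≤ 2 * N ^ 2 / c := by positivity
    set G := 2 * N ^ 2 / c with hG
    have e4 : c / 2 * X ^ 2 + σ ^ 2 / 2 ≤ (5 + N + G) * (τ ^ 2 + Y ^ 2 + a ^ 2) := by
      linarith [mul_nonneg hN (sq_nonneg τ), mul_nonneg hN (sq_nonneg a),
        mul_nonneg hD (sq_nonneg τ), mul_nonneg hD (sq_nonneg a), sq_nonneg Y, sq_nonneg a,
        sq_nonneg τ]
    set W := (5 + N + G) * (τ ^ 2 + Y ^ 2 + a ^ 2) with hW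
    have e5 : σ ^ 2 ≤ 2 * W := by linarith [mul_nonneg hc.le (sq_nonneg X)]
    have e6 : X ^ 2 ≤ 2 / c * W := by
      have : X ^ 2 = 2 / c * (c / 2 * X ^ 2) := by field_simp
      rw [this]
      exact mul_le_mul_of_nonneg_left (by linarith [sq_nonneg σ]) (by positivity)
    calc σ ^ 2 + X ^ 2 ≤ 2 * W + 2 / c * W := add_le_add e5 e6
      _ = _ := by rw [hW]; ring

/-- If the root `ρ̂_{k,+} = −i t̂_{ξd} + i h` is real, then `0 ≤ t̂_{ξd} ≤ C(|t̂'| + |ζ'|)`,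
`|ζ'| ≤ C |t̂|`, and `Im ρ̂_{k,−} = −2 t̂_{ξd}`. -/
theorem stmt9 (n : ℕ) (K : Type*) [MetricSpace K] [CompactSpace K]
    (R : K → Fin n → Fin n → ℝ)
    (hRcont : ∀ j l, Continuous fun z => R z j l)
    (c : ℝ) (hc : 0 < c)
    (hpd : ∀ (z : K) (η : Fin n → ℝ), c * (∑ j, (η j) ^ 2) ≤ ∑ j, ∑ l, R z j l * η j * η l) :
    ∃ C > 0, ∀ k : ℕ, k = 1 ∨ k = 2 →
      ∀ (z : K) (σ : ℝ) (ξ : Fin n → ℝ) (tσ : ℝ) (tξ : Fin n → ℝ) (tξd : ℝ) (h : ℂ),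
        0 ≤ tξd →
        h ^ 2 = mhat (R z) k σ ξ tσ tξ →
        0 ≤ h.re →
        (-Complex.I * (tξd : ℂ) + Complex.I * h).im = 0 →
        (0 ≤ tξd ∧
          tξd ≤ C * (Real.sqrt (tσ ^ 2 + ∑ j, (tξ j) ^ 2) +
            Real.sqrt (σ ^ 2 + ∑ j, (ξ j) ^ 2)) ∧
          Real.sqrt (σ ^ 2 + ∑ j, (ξ j) ^ 2) ≤
            C * Real.sqrt (tσ ^ 2 + (∑ j, (tξ j) ^ 2) + tξd ^ 2) ∧
          (-Complex.I * (tξd : ℂ) - Complex.I * h).im = -2 * tξd) := by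
  have hb : ∀ j l, ∃ m, ∀ z, |R z j l| ≤ m := by
    intro j l
    obtain ⟨m, hm⟩ := isCompact_univ.exists_bound_of_continuousOn (hRcont j l).continuousOn
    exact ⟨m, fun z => hm z (Set.mem_univ z)⟩
  choose M hM using hb
  -- one constant for all points of `K`
  set N : ℝ := ∑ j, ∑ l, |M j l| with hNdef
  have hN : 0 ≤ N := Finset.sum_nonneg fun j _ => Finset.sum_nonneg fun l _ => abs_nonneg _
  set E : ℝ := (2 + 2 / c) * (5 + N + 2 * N ^ 2 / c) with hE
  have hE0 : 0 ≤ E := by positivity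
  refine ⟨1 + E + (2 + 2 * N), by positivity, ?_⟩
  intro k hk z σ ξ tσ tξ a h ha hh hre hroot
  have har : h.re = a := by
    simp at hroot
    linarith
  have him0 : (-Complex.I * (a : ℂ) - Complex.I * h).im = -2 * a := by
    simp [har]
    ring
  obtain ⟨e, he, hek⟩ : ∃ e : ℝ, (e = 1 ∨ e = -1) ∧ (-1 : ℂ) ^ k = (e : ℂ) := by
    rcases hk with rfl | rfl
    · exact ⟨-1, Or.inr rfl, by simp⟩
    · exact ⟨1, Or.inl rfl, by simp⟩
  have hB := aux_bilin (R z) (fun j l => |M j l|) (fun j l => (hM j l z).trans (le_abs_self _))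
  have hr2 : (h ^ 2).re = a ^ 2 - h.im ^ 2 := by
    rw [pow_two, Complex.mul_re, har]; ring
  have hi2 : (h ^ 2).im = 2 * a * h.im := by
    rw [pow_two, Complex.mul_im, har]; ring
  have hn : a ^ 2 + h.im ^ 2 ≤ |a ^ 2 - h.im ^ 2| + |2 * a * h.im| := by
    have h1 := Complex.norm_le_abs_re_add_abs_im (h ^ 2)
    rw [hr2, hi2, norm_pow, Complex.sq_norm, Complex.normSq_apply, har] at h1
    linarith
  have hX2 : Real.sqrt (∑ j, (ξ j) ^ 2) ^ 2 = ∑ j, (ξ j) ^ 2 :=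
    Real.sq_sqrt (Finset.sum_nonneg fun j _ => sq_nonneg _)
  have hY2 : Real.sqrt (∑ j, (tξ j) ^ 2) ^ 2 = ∑ j, (tξ j) ^ 2 :=
    Real.sq_sqrt (Finset.sum_nonneg fun j _ => sq_nonneg _)
  have main := aux_real c N hc hN e σ tσ _ _ a h.im _ _ _ _ he (Real.sqrt_nonneg _)
    (Real.sqrt_nonneg _) ha (hB ξ ξ) (by rw [hX2]; exact hpd z ξ) (hB tξ tξ) (hB ξ tξ) (hB tξ ξ)
    (by rw [← hr2, hh, aux_re (R z) e k hek]) (by rw [← hi2, hh, aux_im (R z) e k hek]) hn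
  rw [hX2, hY2] at main
  obtain ⟨m1, m2⟩ := main
  have hP : 0 ≤ tσ ^ 2 + ∑ j, (tξ j) ^ 2 :=
    add_nonneg (sq_nonneg _) (Finset.sum_nonneg fun j _ => sq_nonneg _)
  have hQ : 0 ≤ σ ^ 2 + ∑ j, (ξ j) ^ 2 :=
    add_nonneg (sq_nonneg _) (Finset.sum_nonneg fun j _ => sq_nonneg _)
  set P := tσ ^ 2 + ∑ j, (tξ j) ^ 2 with hPd
  set Q := σ ^ 2 + ∑ j, (ξ j) ^ 2 with hQd
  set C := 1 + E + (2 + 2 * N) with hC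
  have hC1 : 1 ≤ C := by rw [hC]; linarith
  have hC2 : C ≤ C ^ 2 := le_self_pow₀ hC1 two_ne_zero
  refine ⟨ha, ?_, ?_, him0⟩
  · apply (pow_le_pow_iff_left₀ ha (by positivity) two_ne_zero).1
    have h1 := Real.sq_sqrt hP
    have h2 := Real.sq_sqrt hQ
    have h3 : P + Q ≤ (√P + √Q) ^ 2 := by
      linarith [mul_nonneg (Real.sqrt_nonneg P) (Real.sqrt_nonneg Q)]
    calc a ^ 2 ≤ (2 + 2 * N) * (P + Q) := m1
      _ ≤ C ^ 2 * (√P + √Q) ^ 2 := by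
        apply mul_le_mul _ h3 (by positivity) (by positivity)
        linarith
      _ = _ := by ring
  · have h0 : 0 ≤ P + a ^ 2 := by positivity
    apply Real.sqrt_le_iff.2 ⟨by positivity, ?_⟩
    rw [mul_pow, Real.sq_sqrt h0]
    refine m2.trans (mul_le_mul_of_nonneg_right ?_ h0)
    linarith
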